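/- Let ν ≥ 2 be an integer, t a coefficient vector of length n, L a k×n binary matrix, and S an r×n binary matrix, such that the rows of the stacked matrix [L; S] form a (ν,t)-orthogonal set, the rows of L are (ν,t)-orthonormal, and the rows of S are (ν,t)-null. Then for every x ∈ {0,1}^k and every s in the 𝔽₂-row span of S, the binary vector f := s + Σ_{j=1}^k x_j L_{j*} (mod 2) satisfies ‖f‖_{ν,t} ≡ Σ_{j=1}^k x_j (mod 2^ν). -/

import Mathlib

open Finset

/-- The mod-2 sum (over `𝔽₂`, represented with integer entries in `{0,1}`)
of the rows of `A` indexed by the finite set `K`. -/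
def modTwoSum {ι κ : Type*} (A : ι → κ → ℤ) (K : Finset ι) : κ → ℤ :=
  fun c => (∑ r ∈ K, A r c) % 2

/-- Two binary vectors `v, w` are `(ν,t)`-orthogonal: `Σᵢ vᵢ wᵢ tᵢ ≡ 0 (mod 2^{ν−1})`. -/
def NuOrthoVec (ν : ℕ) {κ : Type*} [Fintype κ] (t v w : κ → ℤ) : Prop :=
  (2 ^ (ν - 1) : ℤ) ∣ ∑ i, v i * w i * t i

/-- The family of rows of `A` is a `(ν,t)`-orthogonal set: any two disjoint subsets
of the rows span `(ν,t)`-orthogonal `𝔽₂`-subspaces; equivalently, the mod-2 sums of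
any two disjoint subsets of rows are `(ν,t)`-orthogonal vectors. -/
def NuOrthoRows (ν : ℕ) {ι κ : Type*} [Fintype κ] (t : κ → ℤ) (A : ι → κ → ℤ) : Prop :=
  ∀ K K' : Finset ι, Disjoint K K' → NuOrthoVec ν t (modTwoSum A K) (modTwoSum A K')

/-- The rows of the integer `{0,1}`-matrix `A`, reduced modulo 2, are linearly
independent over `𝔽₂`. -/
def RowsLinIndepF2 {ι κ : Type*} (A : ι → κ → ℤ) : Prop :=
  LinearIndependent (ZMod 2) (fun r : ι => fun c : κ => ((A r c : ℤ) : ZMod 2))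

/-!
For binary `v` and `w` the mod-2 sum is `v + w - 2 * v * w`, so its norm is the sum of the two
norms minus `2 * ∑ i, v i * w i * t i`. Orthogonality makes the last sum a multiple of
`2 ^ (ν - 1)`, hence the correction vanishes modulo `2 ^ ν`: the norm `v ↦ v ⬝ᵥ t` is additive
under mod-2 sums of disjoint sets of orthogonal rows. Here `f` is the mod-2 sum of the rows of
`[L; S]` selected by `x` and `J`; each selected row of `L` contributes `1`, each row of `S`
contributes `0`.
-/

theorem add_emod_two (a b : ℤ) : (a + b) % 2 = a % 2 + b % 2 - 2 * (a % 2 * (b % 2)) := by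
  rcases Int.emod_two_eq_zero_or_one a with ha | ha <;>
    rcases Int.emod_two_eq_zero_or_one b with hb | hb <;>
    rw [ha, hb] <;> omega

theorem exists_finset_eq_ite_mem {ι : Type*} [Finite ι] [DecidableEq ι] {x : ι → ℤ}
    (hx : ∀ j, x j = 0 ∨ x j = 1) :
    ∃ K : Finset ι, x = fun j => if j ∈ K then 1 else 0 := by
  have := Fintype.ofFinite ι
  refine ⟨univ.filter (x · = 1), funext fun j => ?_⟩
  rcases hx j with h | h <;> simp [h]

section ModTwoSum

variable {ι ρ κ : Type*}

theorem modTwoSum_empty (A : ι → κ → ℤ) : modTwoSum A ∅ = 0 := by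
  ext i
  simp [modTwoSum]

theorem modTwoSum_singleton_of_binary (A : ι → κ → ℤ) (j : ι)
    (hA : ∀ i, A j i = 0 ∨ A j i = 1) : modTwoSum A {j} = A j := by
  ext i
  rcases hA i with h | h <;> simp [modTwoSum, h]

theorem modTwoSum_disjUnion (A : ι → κ → ℤ) (K K' : Finset ι) (h : Disjoint K K') :
    modTwoSum A (K.disjUnion K' h) =
      modTwoSum A K + modTwoSum A K' - (2 : ℤ) • (modTwoSum A K * modTwoSum A K') := by
  ext i
  simp only [modTwoSum, sum_disjUnion, Pi.add_apply, Pi.sub_apply, Pi.smul_apply, Pi.mul_apply,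
    smul_eq_mul]
  exact add_emod_two _ _

theorem modTwoSum_sumElim_disjSum (A : ι → κ → ℤ) (B : ρ → κ → ℤ) (K : Finset ι)
    (J : Finset ρ) (i : κ) :
    modTwoSum (Sum.elim A B) (K.disjSum J) i = (modTwoSum B J i + ∑ j ∈ K, A j i) % 2 := by
  simp only [modTwoSum, sum_disjSum, Sum.elim_inl, Sum.elim_inr, Int.emod_add_emod]
  rw [add_comm]

end ModTwoSum

section Norm

variable {ν : ℕ} {ι κ : Type*} [Fintype κ] {t : κ → ℤ}

theorem NuOrthoVec.add_sub_two_smul_mul_dotProduct_modEq {v w : κ → ℤ} (h : NuOrthoVec ν t v w) :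
    (v + w - (2 : ℤ) • (v * w)) ⬝ᵥ t ≡ v ⬝ᵥ t + w ⬝ᵥ t [ZMOD 2 ^ ν] := by
  -- A divisibility rather than an equation, since `ν - 1` truncates at `ν = 0`.
  have pow_dvd : (2 ^ ν : ℤ) ∣ 2 * 2 ^ (ν - 1) := by
    rw [← pow_succ']
    exact pow_dvd_pow 2 (by omega)
  have correction_dvd : (2 ^ ν : ℤ) ∣ 2 * ((v * w) ⬝ᵥ t) :=
    pow_dvd.trans (mul_dvd_mul_left 2 h)
  rw [sub_dotProduct, add_dotProduct, smul_dotProduct, smul_eq_mul, Int.modEq_iff_dvd,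
    sub_sub_cancel]
  exact correction_dvd

theorem NuOrthoRows.modTwoSum_dotProduct_modEq_sum {A : ι → κ → ℤ} (hA : NuOrthoRows ν t A)
    (K : Finset ι) :
    modTwoSum A K ⬝ᵥ t ≡ ∑ j ∈ K, modTwoSum A {j} ⬝ᵥ t [ZMOD 2 ^ ν] := by
  induction K using Finset.cons_induction with
  | empty => simp [modTwoSum_empty]
  | cons a K ha ih =>
    have hdisj : Disjoint {a} K := disjoint_singleton_left.mpr ha
    rw [sum_cons, ← singleton_disjUnion a K hdisj, modTwoSum_disjUnion]
    exact ((hA {a} K hdisj).add_sub_two_smul_mul_dotProduct_modEq).trans (ih.add_left _)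

end Norm

theorem stmt_11_general {ι ρ κ : Type*} [Fintype ι] [Fintype κ] (ν : ℕ) (t : κ → ℤ)
    (L : ι → κ → ℤ) (hL01 : ∀ j i, L j i = 0 ∨ L j i = 1)
    (S : ρ → κ → ℤ) (hS01 : ∀ a i, S a i = 0 ∨ S a i = 1)
    (hG : NuOrthoRows ν t (Sum.elim L S))
    (hLnorm : ∀ j, (2 ^ ν : ℤ) ∣ ((∑ i, L j i * t i) - 1))
    (hSnull : ∀ a, (2 ^ ν : ℤ) ∣ ∑ i, S a i * t i)
    (x : ι → ℤ) (hx01 : ∀ j, x j = 0 ∨ x j = 1) (J : Finset ρ) :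
    (2 ^ ν : ℤ) ∣
      ((∑ i, ((modTwoSum S J i + ∑ j, x j * L j i) % 2) * t i) - ∑ j, x j) := by
  classical
  obtain ⟨K, rfl⟩ := exists_finset_eq_ite_mem hx01
  have row_norm : ∀ j, modTwoSum (Sum.elim L S) {j} ⬝ᵥ t ≡
      Sum.elim (fun _ => 1) (fun _ => 0) j [ZMOD 2 ^ ν] := by
    rintro (j | a)
    · rw [modTwoSum_singleton_of_binary (Sum.elim L S) (.inl j) (hL01 j)]
      exact (Int.modEq_iff_dvd.mpr (hLnorm j)).symm
    · rw [modTwoSum_singleton_of_binary (Sum.elim L S) (.inr a) (hS01 a)]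
      exact Int.modEq_zero_iff_dvd.mpr (hSnull a)
  have norm_modEq : modTwoSum (Sum.elim L S) (K.disjSum J) ⬝ᵥ t ≡ ∑ _j ∈ K, 1 [ZMOD 2 ^ ν] :=
    calc modTwoSum (Sum.elim L S) (K.disjSum J) ⬝ᵥ t
      _ ≡ ∑ j ∈ K.disjSum J, modTwoSum (Sum.elim L S) {j} ⬝ᵥ t [ZMOD 2 ^ ν] :=
        hG.modTwoSum_dotProduct_modEq_sum _
      _ ≡ ∑ j ∈ K.disjSum J, Sum.elim (fun _ => 1) (fun _ => 0) j [ZMOD 2 ^ ν] :=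
        Int.ModEq.sum fun j _ => row_norm j
      _ = ∑ _j ∈ K, 1 := by
        simp only [sum_disjSum, Sum.elim_inl, Sum.elim_inr, sum_const_zero, add_zero]
  simpa only [dotProduct, modTwoSum_sumElim_disjSum, ite_mul, one_mul, zero_mul, sum_ite_mem,
    univ_inter] using norm_modEq.symm.dvd

/-- Let the rows of `[L; S]` form a `(ν,t)`-orthogonal set, with the rows
of `L` `(ν,t)`-orthonormal and the rows of `S` `(ν,t)`-null. Then for every binary
`x ∈ {0,1}^k` and every `s` in the `𝔽₂`-row span of `S` (i.e. `s = Σ_{a∈J} S_{a*} mod 2`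
for some subset `J` of rows of `S`), the binary vector
`f := s + Σ_j x_j L_{j*} (mod 2)` satisfies `‖f‖_{ν,t} ≡ Σ_j x_j (mod 2^ν)`. -/
theorem stmt_11 (ν n k r : ℕ) (hν : 2 ≤ ν)
    (t : Fin n → ℤ) (ht : ∀ i, Odd (t i))
    (L : Fin k → Fin n → ℤ) (hL01 : ∀ j i, L j i = 0 ∨ L j i = 1)
    (S : Fin r → Fin n → ℤ) (hS01 : ∀ a i, S a i = 0 ∨ S a i = 1)
    (hG : NuOrthoRows ν t (Sum.elim L S))
    (hLnorm : ∀ j, (2 ^ ν : ℤ) ∣ ((∑ i, L j i * t i) - 1))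
    (hSnull : ∀ a, (2 ^ ν : ℤ) ∣ ∑ i, S a i * t i)
    (x : Fin k → ℤ) (hx01 : ∀ j, x j = 0 ∨ x j = 1)
    (J : Finset (Fin r)) :
    (2 ^ ν : ℤ) ∣
      ((∑ i, ((modTwoSum S J i + ∑ j, x j * L j i) % 2) * t i) - ∑ j, x j) :=
  stmt_11_general ν t L hL01 S hS01 hG hLnorm hSnull x hx01 J
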